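/- arXiv:1910.09714 — 2 statements merged into one kernel-verified Lean document; each statement's English description precedes it below -/
import Mathlib

section
/- Let d ≥ 1, p ∈ ℕ, 0 < ρ̲ ≤ ρ̄, L > 0 and 0 < β ≤ p + 1. There exists L₀ > 0, depending only on p, d, ρ̲, ρ̄ and L, with the following property. Let U ⊆ ℝ^d be a closed axis-parallel cube of side length s > 0, let ρ : U → ℝ be measurable with ρ̲ ≤ ρ(u) ≤ ρ̄ for all u ∈ U, let 0 < h ≤ s, and let f belong to the Hölder class H_U(β, L). Then for every x ∈ U and every polynomial g of total degree at most p in d variables that minimizes q ↦ ∫_U (f(u) − q(u))² · 1{‖x − u‖_∞ ≤ h} · ρ(u) du over polynomials of total degree at most p, one has |g(x) − f(x)| ≤ L₀ · h^β. -/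
open MeasureTheory


lemma affine_poly {d p : ℕ} (r : MvPolynomial (Fin d) ℝ) (hr : r.totalDegree ≤ p) (a : Fin d → ℝ) (h : ℝ) :
    ∃ r' : MvPolynomial (Fin d) ℝ, r'.totalDegree ≤ p ∧
      ∀ t, MvPolynomial.eval t r' = MvPolynomial.eval (a + h • t) r := by
  let l : Fin d → MvPolynomial (Fin d) ℝ := fun i =>
    MvPolynomial.C (a i) + MvPolynomial.C h * MvPolynomial.X i
  have hl : ∀ i, (l i).totalDegree ≤ 1 := by
    intro i
    refine (MvPolynomial.totalDegree_add _ _).trans (max_le (by simp) ?_)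
    refine (MvPolynomial.totalDegree_mul _ _).trans (by simp)
  refine ⟨∑ m ∈ r.support, MvPolynomial.C (r.coeff m) * ∏ i, l i ^ m i, ?_, ?_⟩
  · refine MvPolynomial.totalDegree_finsetSum_le fun m hm => ?_
    refine (MvPolynomial.totalDegree_mul _ _).trans ?_
    rw [MvPolynomial.totalDegree_C, zero_add]
    refine (MvPolynomial.totalDegree_finsetProd _ _).trans ?_
    refine le_trans ?_ ((MvPolynomial.le_totalDegree hm).trans hr)
    rw [Finsupp.sum_fintype _ _ (fun _ => rfl)]
    refine Finset.sum_le_sum fun i _ => ?_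
    refine (MvPolynomial.totalDegree_pow _ _).trans ?_
    nlinarith [hl i]
  · intro t
    rw [MvPolynomial.eval_eq' (a + h • t) r]
    simp [l]

lemma taylor_poly {d k : ℕ} (M : MultilinearMap ℝ (fun _ : Fin k => (Fin d → ℝ)) ℝ) (x : Fin d → ℝ) :
    ∃ r : MvPolynomial (Fin d) ℝ, r.totalDegree ≤ k ∧
      ∀ u, MvPolynomial.eval u r = M (fun _ => u - x) := by
  refine ⟨∑ σ : Fin k → Fin d, MvPolynomial.C (M fun j => Pi.single (σ j) 1) *
    ∏ j, (MvPolynomial.X (σ j) - MvPolynomial.C (x (σ j))), ?_, ?_⟩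
  · refine MvPolynomial.totalDegree_finsetSum_le fun m hm => ?_
    refine (MvPolynomial.totalDegree_mul _ _).trans ?_
    rw [MvPolynomial.totalDegree_C, zero_add]
    refine (MvPolynomial.totalDegree_finsetProd _ _).trans ?_
    refine (Finset.sum_le_card_nsmul _ _ 1 fun i _ => ?_).trans (by simp)
    exact (MvPolynomial.totalDegree_sub_C_le _ _).trans (by simp)
  · intro u
    have h1 : u - x = ∑ i, (u i - x i) • (Pi.single i (1:ℝ) : Fin d → ℝ) := by
      ext j
      simp [Finset.sum_apply, Pi.single_apply]
    have h2 : M (fun _ => u - x) = ∑ σ : Fin k → Fin d, M fun j => (u (σ j) - x (σ j)) • (Pi.single (σ j) (1:ℝ) : Fin d → ℝ) := by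
      rw [← MultilinearMap.map_sum M (fun _ i => (u i - x i) • (Pi.single i (1:ℝ) : Fin d → ℝ))]
      congr 1; funext _; exact h1
    rw [h2, map_sum]
    refine Finset.sum_congr rfl fun σ _ => ?_
    rw [MultilinearMap.map_smul_univ M (fun j => u (σ j) - x (σ j))]
    simp [mul_comm]

open scoped Pointwise in
lemma cube_cov {d : ℕ} (F : (Fin d → ℝ) → ℝ) (a : Fin d → ℝ) (h : ℝ) (hh : 0 < h) :
    ∫ u in Set.Icc a (fun i => a i + h), F u = h ^ d * ∫ t in Set.Icc (0 : Fin d → ℝ) 1, F (a + h • t) := by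
  rw [Measure.setIntegral_comp_smul_of_pos (μ := (volume : Measure (Fin d → ℝ))) (fun v => F (a + v)) _ hh]
  have e : h • Set.Icc (0 : Fin d → ℝ) 1 = (fun v => a + v) ⁻¹' (Set.Icc a (fun i => a i + h)) := by
    ext v
    rw [Set.mem_smul_set_iff_inv_smul_mem₀ hh.ne']
    simp only [Set.mem_Icc, Pi.le_def, Set.mem_preimage, Pi.smul_apply, smul_eq_mul, Pi.add_apply, Pi.zero_apply, Pi.one_apply]
    refine and_congr (forall_congr' fun i => ?_) (forall_congr' fun i => ?_)
    · rw [← div_eq_inv_mul, le_div_iff₀ hh]; simp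
    · rw [← div_eq_inv_mul, div_le_iff₀ hh]; simp
  have := (measurePreserving_add_left (volume : Measure (Fin d → ℝ)) a).setIntegral_preimage_emb
    (MeasurableEquiv.addLeft a).measurableEmbedding F (Set.Icc a (fun i => a i + h))
  rw [e, this]
  simp [hh.ne']

lemma norm_equiv (d p : ℕ) : ∃ C : ℝ, 0 < C ∧ ∀ r : MvPolynomial (Fin d) ℝ, r.totalDegree ≤ p →
    ∀ t ∈ Set.Icc (0 : Fin d → ℝ) 1, (MvPolynomial.eval t r) ^ 2 ≤
      C * ∫ u in Set.Icc (0 : Fin d → ℝ) 1, (MvPolynomial.eval u r) ^ 2 := by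
  let K := Set.Icc (0 : Fin d → ℝ) 1
  let μ : Measure K := Measure.comap Subtype.val volume
  have hK : MeasurableSet K := measurableSet_Icc
  have : CompactSpace K := isCompact_iff_compactSpace.mp isCompact_Icc
  have : IsFiniteMeasure μ := by
    constructor
    rw [comap_subtype_coe_apply hK]
    simpa using (isCompact_Icc (a := (0 : Fin d → ℝ)) (b := 1)).measure_lt_top
  have hInt : (interior K).Nonempty := by
    refine ⟨fun _ => 1/2, ?_⟩
    have : K = Set.pi Set.univ (fun _ => Set.Icc (0:ℝ) 1) := by
      rw [Set.pi_univ_Icc]; rfl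
    rw [this, interior_pi_set Set.finite_univ]
    simp; norm_num
  have hcl : K ⊆ closure (interior K) := by
    rw [(convex_Icc (𝕜 := ℝ) (0 : Fin d → ℝ) 1).closure_interior_eq_closure_of_nonempty_interior hInt]
    exact subset_closure
  have : μ.IsOpenPosMeasure := by
    constructor
    rintro O hO ⟨y, hy⟩
    obtain ⟨V, hV, rfl⟩ := isOpen_induced_iff.mp hO
    rw [comap_subtype_coe_apply hK, Subtype.image_preimage_coe]
    obtain ⟨z, hz1, hz2⟩ := mem_closure_iff.mp (hcl y.2) V hV hy
    refine ((hV.inter isOpen_interior).measure_pos volume ⟨z, hz1, hz2⟩).trans_le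
      (measure_mono ?_) |>.ne'
    rintro w ⟨h1, h2⟩
    exact ⟨interior_subset h2, h1⟩
  let Φ : MvPolynomial (Fin d) ℝ →ₗ[ℝ] C(K, ℝ) :=
    { toFun := fun r => ⟨fun t => MvPolynomial.eval t.1 r, (MvPolynomial.continuous_eval r).comp continuous_subtype_val⟩
      map_add' := by intro r s; ext t; simp
      map_smul' := by intro c r; ext t; simp }
  let V := (MvPolynomial.restrictTotalDegree (Fin d) ℝ p).map Φ
  have : FiniteDimensional ℝ V := Module.Finite.map _ _
  let T : V →ₗ[ℝ] Lp ℝ 2 μ := (ContinuousMap.toLp 2 μ ℝ : C(K, ℝ) →L[ℝ] Lp ℝ 2 μ).toLinearMap ∘ₗ V.subtype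
  have hT : LinearMap.ker T = ⊥ := by
    rw [LinearMap.ker_eq_bot]
    exact (ContinuousMap.toLp_injective μ).comp Subtype.val_injective
  obtain ⟨c, hc, hA⟩ := LinearMap.exists_antilipschitzWith (𝕜 := ℝ) (E := V) (F := Lp ℝ 2 μ) T hT
  refine ⟨(c:ℝ)^2, by positivity, fun r hr t ht => ?_⟩
  have hmem : Φ r ∈ V := Submodule.mem_map_of_mem ((MvPolynomial.mem_restrictTotalDegree _ _ _).2 hr)
  have h1 : ‖Φ r‖ ≤ c * ‖T ⟨Φ r, hmem⟩‖ := by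
    have := hA.le_mul_dist ⟨Φ r, hmem⟩ 0
    simpa using this
  have h2 : |MvPolynomial.eval t r| ≤ ‖Φ r‖ := (Φ r).norm_coe_le_norm ⟨t, ht⟩
  have h3 : ‖T ⟨Φ r, hmem⟩‖ ^ 2 = ∫ u in Set.Icc (0 : Fin d → ℝ) 1, (MvPolynomial.eval u r) ^ 2 := by
    rw [← integral_subtype_comap hK (fun u => (MvPolynomial.eval u r) ^ 2)]
    rw [← real_inner_self_eq_norm_sq, L2.inner_def]
    refine integral_congr_ae ?_
    filter_upwards [ContinuousMap.coeFn_toLp (p := 2) (𝕜 := ℝ) μ (Φ r)] with u hu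
    have : (T ⟨Φ r, hmem⟩ : K → ℝ) u = MvPolynomial.eval u.1 r := hu
    rw [this]
    simp [sq]
  rw [← h3, ← mul_pow, ← sq_abs]
  exact pow_le_pow_left₀ (abs_nonneg _) (h2.trans h1) 2

/-- **Bias of the local `L²`-projection** (Part 4 of the paper's Lemma on the
`L²(P_X)`-projection). There is `L₀ > 0`, depending only on `p`, `d`, `ρ̲`, `ρ̄` and `L`,
such that for every axis-parallel cube `U` of side `s`, weight `ρ` with
`ρ̲ ≤ ρ ≤ ρ̄` on `U`, bandwidth `0 < h ≤ s`, function `f` in the Hölder class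
`H_U(β, L)` with `0 < β ≤ p + 1` (with `n` the largest integer `< β`), point `x ∈ U`,
and any polynomial `g` of total degree at most `p` minimizing the kernel-weighted
least-squares criterion (box kernel, bandwidth `h`), one has `|g(x) − f(x)| ≤ L₀ h^β`. -/
theorem projection_bias_bound (d p : ℕ) (hd : 1 ≤ d) (ρlo ρhi L : ℝ)
    (hρlo : 0 < ρlo) (hρ : ρlo ≤ ρhi) (hL : 0 < L) :
    ∃ L₀ : ℝ, 0 < L₀ ∧
      ∀ (β : ℝ) (n : ℕ), 0 < β → β ≤ (p : ℝ) + 1 → (n : ℝ) < β → β ≤ (n : ℝ) + 1 →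
      ∀ (c : Fin d → ℝ) (s : ℝ), 0 < s →
      ∀ ρ : (Fin d → ℝ) → ℝ, Measurable ρ →
        (∀ u ∈ Set.Icc c (fun i => c i + s), ρlo ≤ ρ u ∧ ρ u ≤ ρhi) →
      ∀ h : ℝ, 0 < h → h ≤ s →
      ∀ f : (Fin d → ℝ) → ℝ,
        ContDiffOn ℝ n f (Set.Icc c (fun i => c i + s)) →
        (∀ x ∈ Set.Icc c (fun i => c i + s), ∀ y ∈ Set.Icc c (fun i => c i + s),
          |f y - ∑ k ∈ Finset.range (n + 1), (k.factorial : ℝ)⁻¹ *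
            iteratedFDerivWithin ℝ k f (Set.Icc c (fun i => c i + s)) x (fun _ => y - x)|
            ≤ L * ‖y - x‖ ^ β) →
      ∀ x ∈ Set.Icc c (fun i => c i + s),
      ∀ g : MvPolynomial (Fin d) ℝ, g.totalDegree ≤ p →
        (∀ q : MvPolynomial (Fin d) ℝ, q.totalDegree ≤ p →
          ∫ u in Set.Icc c (fun i => c i + s),
              (f u - MvPolynomial.eval u g) ^ 2 * (if ‖x - u‖ ≤ h then ρ u else 0)
            ≤ ∫ u in Set.Icc c (fun i => c i + s),
              (f u - MvPolynomial.eval u q) ^ 2 * (if ‖x - u‖ ≤ h then ρ u else 0)) →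
        |MvPolynomial.eval x g - f x| ≤ L₀ * h ^ β := by
  obtain ⟨C, hC, hCb⟩ := norm_equiv d p
  have hρhi : 0 < ρhi := hρlo.trans_le hρ
  set A : ℝ := C * (4 * L ^ 2 * ρhi * 2 ^ d / ρlo) with hA
  have hApos : 0 < A := by positivity
  refine ⟨Real.sqrt A, Real.sqrt_pos.2 hApos, ?_⟩
  intro β n hβ hβp hnβ hβn c s hs ρ hρm hρb h hh hhs f hf hfT x hx g hg hmin
  have hnp : n ≤ p := by
    have : (n : ℝ) < (p : ℝ) + 1 := hnβ.trans_le hβp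
    exact Nat.lt_succ_iff.mp (by exact_mod_cast this)
  set U := Set.Icc c (fun i => c i + s) with hU
  have hUm : MeasurableSet U := measurableSet_Icc
  have hUc : IsCompact U := isCompact_Icc
  -- Taylor polynomial
  choose τ hτd hτe using fun k : ℕ =>
    taylor_poly (iteratedFDerivWithin ℝ k f U x).toMultilinearMap x
  obtain ⟨T, hTd, hTe⟩ : ∃ T : MvPolynomial (Fin d) ℝ, T.totalDegree ≤ p ∧
      ∀ u, MvPolynomial.eval u T = ∑ k ∈ Finset.range (n + 1), (k.factorial : ℝ)⁻¹ *
            iteratedFDerivWithin ℝ k f U x (fun _ => u - x) := by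
    refine ⟨∑ k ∈ Finset.range (n + 1), MvPolynomial.C (k.factorial : ℝ)⁻¹ * τ k, ?_, ?_⟩
    · refine MvPolynomial.totalDegree_finsetSum_le fun k hk => ?_
      refine (MvPolynomial.totalDegree_mul _ _).trans ?_
      rw [MvPolynomial.totalDegree_C, zero_add]
      have := Finset.mem_range.1 hk
      exact (hτd k).trans (by omega)
    · intro u
      rw [map_sum]
      refine Finset.sum_congr rfl fun k _ => ?_
      rw [map_mul, MvPolynomial.eval_C, hτe]
      rfl
  have hTb : ∀ u ∈ U, |f u - MvPolynomial.eval u T| ≤ L * ‖u - x‖ ^ β := by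
    intro u hu
    rw [hTe]
    exact hfT x hx u hu
  have hTx : MvPolynomial.eval x T = f x := by
    have := hTb x hx
    rw [sub_self, norm_zero, Real.zero_rpow hβ.ne', mul_zero] at this
    linarith [abs_nonpos_iff.1 this]
  -- the weight
  set w : (Fin d → ℝ) → ℝ := fun u => if ‖x - u‖ ≤ h then ρ u else 0 with hw
  have hball : MeasurableSet {u : Fin d → ℝ | ‖x - u‖ ≤ h} :=
    (isClosed_le (by fun_prop) continuous_const).measurableSet
  have hwm : Measurable w := Measurable.ite hball hρm measurable_const
  have hw0 : ∀ u ∈ U, 0 ≤ w u := by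
    intro u hu
    simp only [hw]
    split_ifs
    · exact hρlo.le.trans (hρb u hu).1
    · exact le_rfl
  have hw1 : ∀ u ∈ U, w u ≤ ρhi := by
    intro u hu
    simp only [hw]
    split_ifs
    · exact (hρb u hu).2
    · exact hρhi.le
  have hInt : ∀ F : (Fin d → ℝ) → ℝ, ContinuousOn F U → IntegrableOn (fun u => F u * w u) U := by
    intro F hF
    refine Integrable.mul_bdd (c := ρhi) (hF.integrableOn_compact hUc) hwm.aestronglyMeasurable ?_
    refine (ae_restrict_iff' hUm).2 (Filter.Eventually.of_forall fun u hu => ?_)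
    rw [Real.norm_eq_abs, abs_of_nonneg (hw0 u hu)]
    exact hw1 u hu
  have hfc : ContinuousOn f U := hf.continuousOn
  have hpc : ∀ q : MvPolynomial (Fin d) ℝ, ContinuousOn (fun u => MvPolynomial.eval u q) U :=
    fun q => (MvPolynomial.continuous_eval q).continuousOn
  have iT : IntegrableOn (fun u => (f u - MvPolynomial.eval u T) ^ 2 * w u) U := hInt _ ((hfc.sub (hpc T)).pow 2)
  have ig : IntegrableOn (fun u => (f u - MvPolynomial.eval u g) ^ 2 * w u) U := hInt _ ((hfc.sub (hpc g)).pow 2)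
  have igT : IntegrableOn (fun u => (MvPolynomial.eval u g - MvPolynomial.eval u T) ^ 2 * w u) U := hInt _ (((hpc g).sub (hpc T)).pow 2)
  -- upper bound
  have hup : ∫ u in U, (f u - MvPolynomial.eval u T) ^ 2 * w u
      ≤ (L * h ^ β) ^ 2 * ρhi * (2 * h) ^ d := by
    have e1 : ∫ u in U, (f u - MvPolynomial.eval u T) ^ 2 * w u
        ≤ ∫ u in U, (Metric.closedBall x h).indicator (fun _ => (L * h ^ β) ^ 2 * ρhi) u := by
      refine setIntegral_mono_on iT ?_ hUm ?_
      · exact (integrableOn_const (hUc.measure_lt_top.ne)).indicator measurableSet_closedBall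
      · intro u hu
        by_cases hux : ‖x - u‖ ≤ h
        · have hm : u ∈ Metric.closedBall x h := by
            rw [Metric.mem_closedBall, dist_comm, dist_eq_norm]; exact hux
          rw [Set.indicator_of_mem hm]
          refine mul_le_mul ?_ (hw1 u hu) (hw0 u hu) (by positivity)
          rw [← sq_abs]
          refine pow_le_pow_left₀ (abs_nonneg _) ((hTb u hu).trans ?_) 2
          refine mul_le_mul_of_nonneg_left ?_ hL.le
          rw [norm_sub_rev] at hux
          exact Real.rpow_le_rpow (norm_nonneg _) hux hβ.le
        · have : w u = 0 := by simp only [hw]; rw [if_neg hux]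
          rw [this, mul_zero]
          exact Set.indicator_nonneg (fun _ _ => by positivity) _
    refine e1.trans ?_
    rw [setIntegral_indicator measurableSet_closedBall, setIntegral_const, smul_eq_mul, mul_comm]
    refine mul_le_mul_of_nonneg_left ?_ (by positivity)
    have hv : volume (Metric.closedBall x h) = ENNReal.ofReal ((2 * h) ^ d) := by
      rw [Real.volume_pi_closedBall x hh.le, Fintype.card_fin]
    refine (measureReal_mono Set.inter_subset_right (by rw [hv]; exact ENNReal.ofReal_ne_top)).trans ?_
    rw [measureReal_def, hv, ENNReal.toReal_ofReal (by positivity)]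
  have hmid : ∫ u in U, (MvPolynomial.eval u g - MvPolynomial.eval u T) ^ 2 * w u
      ≤ 4 * ((L * h ^ β) ^ 2 * ρhi * (2 * h) ^ d) := by
    have e1 : ∫ u in U, (MvPolynomial.eval u g - MvPolynomial.eval u T) ^ 2 * w u
        ≤ ∫ u in U, (2 * ((f u - MvPolynomial.eval u g) ^ 2 * w u)
            + 2 * ((f u - MvPolynomial.eval u T) ^ 2 * w u)) := by
      refine setIntegral_mono_on igT ((ig.const_mul 2).add (iT.const_mul 2)) hUm ?_
      intro u hu
      have := hw0 u hu
      have k : 0 ≤ ((f u - MvPolynomial.eval u g) + (f u - MvPolynomial.eval u T)) ^ 2 * w u := by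
        positivity
      nlinarith [k]
    rw [integral_add (ig.const_mul 2) (iT.const_mul 2), integral_const_mul,
      integral_const_mul] at e1
    have e2 := hmin T hTd
    linarith [hup, e1, e2]
  -- the small cube
  set a : Fin d → ℝ := fun i => max (c i) (x i - h) with ha
  set Q := Set.Icc a (fun i => a i + h) with hQ
  have ha1 : ∀ i, c i ≤ a i := fun i => le_max_left _ _
  have ha2 : ∀ i, x i - h ≤ a i := fun i => le_max_right _ _
  have ha3 : ∀ i, a i ≤ x i := fun i => max_le (hx.1 i) (by linarith)
  have ha4 : ∀ i, a i + h ≤ c i + s := by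
    intro i
    have : a i ≤ c i + s - h := max_le (by linarith) (by have := hx.2 i; simp only at this; linarith)
    linarith
  have hQU : Q ⊆ U := by
    intro u hu
    refine ⟨fun i => (ha1 i).trans (hu.1 i), fun i => (hu.2 i).trans (ha4 i)⟩
  have hQx : ∀ u ∈ Q, ‖x - u‖ ≤ h := by
    intro u hu
    rw [pi_norm_le_iff_of_nonneg hh.le]
    intro i
    have h1 := hu.1 i
    have h2 := hu.2 i
    simp only at h2
    rw [Real.norm_eq_abs, abs_le, Pi.sub_apply]
    constructor
    · linarith [ha3 i]
    · linarith [ha2 i]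
  have hlow : ρlo * ∫ u in Q, (MvPolynomial.eval u g - MvPolynomial.eval u T) ^ 2
      ≤ ∫ u in U, (MvPolynomial.eval u g - MvPolynomial.eval u T) ^ 2 * w u := by
    have hQI : IntegrableOn (fun u => (MvPolynomial.eval u g - MvPolynomial.eval u T) ^ 2) Q :=
      ((((hpc g).sub (hpc T)).pow 2).mono hQU).integrableOn_compact isCompact_Icc
    rw [← integral_const_mul]
    have e1 : ∫ u in Q, ρlo * (MvPolynomial.eval u g - MvPolynomial.eval u T) ^ 2
        ≤ ∫ u in Q, (MvPolynomial.eval u g - MvPolynomial.eval u T) ^ 2 * w u := by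
      refine setIntegral_mono_on (hQI.const_mul _) (igT.mono_set hQU) measurableSet_Icc ?_
      intro u hu
      have : w u = ρ u := by simp only [hw]; rw [if_pos (hQx u hu)]
      rw [this, mul_comm]
      exact mul_le_mul_of_nonneg_left (hρb u (hQU hu)).1 (sq_nonneg _)
    refine e1.trans (setIntegral_mono_set igT ?_ hQU.eventuallyLE)
    refine (ae_restrict_iff' hUm).2 (Filter.Eventually.of_forall fun u hu => ?_)
    exact mul_nonneg (sq_nonneg _) (hw0 u hu)
  obtain ⟨r, hrd, hre⟩ := affine_poly (g - T)
    ((MvPolynomial.totalDegree_sub g T).trans (max_le hg hTd)) a h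
  have hcov := cube_cov (fun u => (MvPolynomial.eval u g - MvPolynomial.eval u T) ^ 2) a h hh
  have hre' : ∀ t, MvPolynomial.eval (a + h • t) g - MvPolynomial.eval (a + h • t) T
      = MvPolynomial.eval t r := fun t => by rw [hre, map_sub]
  simp only [hre'] at hcov
  have hxt : a + h • (h⁻¹ • (x - a)) = x := by
    rw [smul_smul, mul_inv_cancel₀ hh.ne', one_smul, add_sub_cancel]
  have hkey := hCb r hrd (h⁻¹ • (x - a)) (by
    constructor
    · intro i
      have := ha3 i
      simp only [Pi.zero_apply, Pi.smul_apply, Pi.sub_apply, smul_eq_mul]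
      exact mul_nonneg (by positivity) (by linarith)
    · intro i
      simp only [Pi.one_apply, Pi.smul_apply, Pi.sub_apply, smul_eq_mul]
      rw [← div_eq_inv_mul, div_le_one hh]
      linarith [ha2 i])
  rw [← hre', hxt, hTx] at hkey
  set J := ∫ u in Set.Icc (0 : Fin d → ℝ) 1, (MvPolynomial.eval u r) ^ 2 with hJ
  have hJb : J ≤ 4 * L ^ 2 * ρhi * 2 ^ d / ρlo * (h ^ β) ^ 2 := by
    have e := hlow.trans hmid
    rw [hcov, mul_pow 2 h d] at e
    have hhd : 0 < h ^ d := by positivity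
    rw [div_mul_eq_mul_div, le_div_iff₀ hρlo]
    refine le_of_mul_le_mul_left ?_ hhd
    nlinarith [e]
  have hfin : (MvPolynomial.eval x g - f x) ^ 2 ≤ (Real.sqrt A * h ^ β) ^ 2 := by
    rw [mul_pow, Real.sq_sqrt hApos.le, hA, mul_assoc]
    exact hkey.trans (mul_le_mul_of_nonneg_left hJb hC.le)
  exact abs_le_of_sq_le_sq hfin (by positivity)
end

section
/- Let d ≥ 1, p ∈ ℕ and 0 < ρ̲ ≤ ρ̄. There exists κ₀ > 0, depending only on p, d, ρ̲ and ρ̄, with the following property. Let U ⊆ ℝ^d be a closed axis-parallel cube of side length s > 0, let ρ : U → ℝ be measurable with ρ̲ ≤ ρ(u) ≤ ρ̄ for all u ∈ U, let 0 < h ≤ s, and let f : U → [0,1] be measurable. Then for every x, x̂ ∈ U, every polynomial g_x of total degree at most p minimizing q ↦ ∫_U (f(u) − q(u))² · 1{‖x − u‖_∞ ≤ h} · ρ(u) du, and every polynomial g_{x̂} of total degree at most p minimizing q ↦ ∫_U (f(u) − q(u))² · 1{‖x̂ − u‖_∞ ≤ h} · ρ(u) du, one has |g_x(x) − g_{x̂}(x̂)|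 ≤ κ₀ · h^{−1} · ‖x − x̂‖_∞. -/
open MeasureTheory

lemma aux_lip (d : ℕ) (q : MvPolynomial (Fin d) ℝ) :
    ∃ L : ℝ, 0 ≤ L ∧ (∀ u ∈ Metric.closedBall (0 : Fin d → ℝ) 3, |MvPolynomial.eval u q| ≤ L) ∧
      ∀ u ∈ Metric.closedBall (0 : Fin d → ℝ) 3, ∀ v ∈ Metric.closedBall (0 : Fin d → ℝ) 3,
        |MvPolynomial.eval u q - MvPolynomial.eval v q| ≤ L * ‖u - v‖ := by
  induction q using MvPolynomial.induction_on with
  | C a => exact ⟨|a|, abs_nonneg _, by simp, by intros; simp; positivity⟩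
  | add q r hq hr =>
    obtain ⟨L, h0, h1, h2⟩ := hq
    obtain ⟨L', h0', h1', h2'⟩ := hr
    refine ⟨L + L', by positivity, ?_, ?_⟩
    · intro u hu
      rw [map_add]
      exact (abs_add_le _ _).trans (add_le_add (h1 u hu) (h1' u hu))
    · intro u hu v hv
      rw [map_add, map_add, add_sub_add_comm, add_mul]
      exact (abs_add_le _ _).trans (add_le_add (h2 u hu v hv) (h2' u hu v hv))
  | mul_X q i hq =>
    obtain ⟨L, h0, h1, h2⟩ := hq
    have hb : ∀ u ∈ Metric.closedBall (0 : Fin d → ℝ) 3, |u i| ≤ 3 := by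
      intro u hu
      have : ‖u i‖ ≤ ‖u‖ := norm_le_pi_norm u i
      rw [mem_closedBall_zero_iff] at hu
      rw [Real.norm_eq_abs] at this
      linarith
    refine ⟨L * 4, by positivity, ?_, ?_⟩
    · intro u hu
      rw [map_mul, MvPolynomial.eval_X, abs_mul]
      exact mul_le_mul (h1 u hu) ((hb u hu).trans (by norm_num)) (abs_nonneg _) h0
    · intro u hu v hv
      rw [map_mul, MvPolynomial.eval_X, map_mul, MvPolynomial.eval_X]
      have e : MvPolynomial.eval u q * u i - MvPolynomial.eval v q * v i =
        (MvPolynomial.eval u q - MvPolynomial.eval v q) * u i + MvPolynomial.eval v q * (u - v) i := by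
        simp; ring
      have h3 : |(u - v) i| ≤ ‖u - v‖ := norm_le_pi_norm (u - v) i
      rw [e]
      refine (abs_add_le _ _).trans ?_
      rw [abs_mul, abs_mul]
      have a1 := mul_le_mul (h2 u hu v hv) (hb u hu) (abs_nonneg _) (by positivity)
      have a2 := mul_le_mul (h1 v hv) h3 (abs_nonneg _) h0
      linarith

lemma aux_deg (d : ℕ) (q : MvPolynomial (Fin d) ℝ) (F : Fin d → MvPolynomial (Fin d) ℝ)
    (hF : ∀ i, (F i).totalDegree ≤ 1) : (MvPolynomial.bind₁ F q).totalDegree ≤ q.totalDegree := by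
  rw [MvPolynomial.bind₁, MvPolynomial.aeval_def, MvPolynomial.eval₂_eq]
  refine MvPolynomial.totalDegree_finsetSum_le fun m hm => ?_
  refine (MvPolynomial.totalDegree_mul _ _).trans ?_
  rw [MvPolynomial.algebraMap_eq, MvPolynomial.totalDegree_C, zero_add]
  refine (MvPolynomial.totalDegree_finsetProd _ _).trans ?_
  refine le_trans ?_ (MvPolynomial.le_totalDegree hm)
  rw [Finsupp.sum]
  refine Finset.sum_le_sum fun i _ => ?_
  refine (MvPolynomial.totalDegree_pow _ _).trans ?_
  have := Nat.mul_le_mul_left (m i) (hF i)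
  simpa using this

lemma aux_pos (d : ℕ) (q : MvPolynomial (Fin d) ℝ)
    (h : ∫ u in Set.Icc (0 : Fin d → ℝ) 1, (MvPolynomial.eval u q) ^ 2 = 0) : q = 0 := by
  have hc : Continuous fun u : Fin d → ℝ => (MvPolynomial.eval u q) ^ 2 :=
    (MvPolynomial.continuous_eval q).pow 2
  rw [setIntegral_eq_zero_iff_of_nonneg_ae (Filter.Eventually.of_forall fun u => sq_nonneg _)
    (hc.continuousOn.integrableOn_compact isCompact_Icc)] at h
  have hsub : Set.pi Set.univ (fun _ : Fin d => Set.Ioo (0:ℝ) 1) ⊆ Set.Icc (0 : Fin d → ℝ) 1 := by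
    intro u hu
    exact ⟨fun i => (hu i trivial).1.le, fun i => (hu i trivial).2.le⟩
  have h2 := ae_restrict_of_ae_restrict_of_subset hsub h
  have h3 := Measure.eqOn_open_of_ae_eq h2 (isOpen_set_pi Set.finite_univ fun _ _ => isOpen_Ioo)
    hc.continuousOn continuousOn_const
  refine MvPolynomial.funext_set (fun _ : Fin d => Set.Ioo (0:ℝ) 1)
    (fun _ => Set.Ioo_infinite one_pos) fun u hu => ?_
  have := h3 hu
  simpa using this

lemma aux_unit (d p : ℕ) : ∃ A : ℝ, 0 < A ∧ ∀ q : MvPolynomial (Fin d) ℝ, q.totalDegree ≤ p →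
    ∃ N : ℝ, 0 ≤ N ∧ N ^ 2 ≤ A * ∫ u in Set.Icc (0 : Fin d → ℝ) 1, (MvPolynomial.eval u q) ^ 2 ∧
     (∀ u ∈ Metric.closedBall (0 : Fin d → ℝ) 3, |MvPolynomial.eval u q| ≤ A * N) ∧
      ∀ u ∈ Metric.closedBall (0 : Fin d → ℝ) 3, ∀ v ∈ Metric.closedBall (0 : Fin d → ℝ) 3,
        |MvPolynomial.eval u q - MvPolynomial.eval v q| ≤ A * N * ‖u - v‖ := by
  let V := MvPolynomial.restrictTotalDegree (Fin d) ℝ p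
  let b := Module.finBasis ℝ V
  set n := Module.finrank ℝ V
  choose L hL0 hL1 hL2 using fun i : Fin n => aux_lip d (b i : MvPolynomial (Fin d) ℝ)
  let F : (Fin n → ℝ) → (Fin d → ℝ) → ℝ := fun v u => ∑ i, v i * MvPolynomial.eval u (b i : MvPolynomial (Fin d) ℝ)
  let φ : (Fin n → ℝ) → MvPolynomial (Fin d) ℝ := fun v => ((∑ i, v i • b i : V) : MvPolynomial (Fin d) ℝ)
  have hφ : ∀ v u, MvPolynomial.eval u (φ v) = F v u := by
    intro v u
    simp [φ, F, MvPolynomial.smul_eval]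
  have hφ0 : ∀ v, φ v = 0 → v = 0 := by
    intro v hv
    have h1 : (∑ i, v i • b i : V) = 0 := Subtype.ext hv
    have := Fintype.linearIndependent_iff.1 b.linearIndependent v h1
    exact _root_.funext this
  let G : (Fin n → ℝ) → ℝ := fun v => ∫ u in Set.Icc (0 : Fin d → ℝ) 1, (F v u) ^ 2
  have hFc : Continuous (Function.uncurry fun v u => (F v u) ^ 2) := by
    refine Continuous.pow ?_ 2
    refine continuous_finsetSum _ fun i _ => ?_
    exact ((continuous_apply i).comp continuous_fst).mul
      ((MvPolynomial.continuous_eval _).comp continuous_snd)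
  have hGc : Continuous G := continuous_parametric_integral_of_continuous hFc isCompact_Icc
  have hGpos : ∀ v, v ≠ 0 → 0 < G v := by
    intro v hv
    refine lt_of_le_of_ne (integral_nonneg fun u => sq_nonneg _) fun h0 => hv (hφ0 v (aux_pos d _ ?_))
    simp only [hφ]
    exact h0.symm
  have hhom : ∀ (t : ℝ) v, G (t • v) = t ^ 2 * G v := by
    intro t v
    simp only [G]
    rw [← integral_const_mul]
    congr 1
    ext u
    rw [← mul_pow]
    congr 1
    simp [F, Finset.mul_sum, mul_assoc]
  obtain ⟨m, hm, hGm⟩ : ∃ m : ℝ, 0 < m ∧ ∀ v, m * ‖v‖ ^ 2 ≤ G v := by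
    have hG0 : G 0 = 0 := by simpa using hhom 0 0
    rcases (Metric.sphere (0 : Fin n → ℝ) 1).eq_empty_or_nonempty with he | hne
    · refine ⟨1, one_pos, fun v => ?_⟩
      have : v = 0 := by
        by_contra hv
        have : (‖v‖⁻¹ • v) ∈ Metric.sphere (0 : Fin n → ℝ) 1 := by
          simp [norm_smul, hv]
        rw [he] at this
        exact this
      subst this
      simp [hG0]
    · obtain ⟨w, hw, hmin⟩ := (isCompact_sphere (0 : Fin n → ℝ) 1).exists_isMinOn hne hGc.continuousOn
      have hw0 : w ≠ 0 := by
        rintro rfl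
        simp at hw
      refine ⟨G w, hGpos w hw0, fun v => ?_⟩
      by_cases hv : v = 0
      · subst hv; simp [hG0]
      · have h1 : (‖v‖⁻¹ • v) ∈ Metric.sphere (0 : Fin n → ℝ) 1 := by
          simp [norm_smul, hv]
        have h2 : G w ≤ G (‖v‖⁻¹ • v) := hmin h1
        rw [hhom] at h2
        have h3 : 0 < ‖v‖ := norm_pos_iff.2 hv
        rw [inv_pow, inv_mul_eq_div, le_div_iff₀ (by positivity)] at h2
        exact h2
  have hS : 0 ≤ ∑ i, L i := Finset.sum_nonneg fun i _ => hL0 i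
  refine ⟨m⁻¹ + ∑ i, L i, by positivity, fun q hq => ?_⟩
  let qV : V := ⟨q, (MvPolynomial.mem_restrictTotalDegree _ _ _).2 hq⟩
  let v : Fin n → ℝ := fun i => b.repr qV i
  have hqv : φ v = q := by
    have : (∑ i, v i • b i : V) = qV := b.sum_repr qV
    simp only [φ, this]
    rfl
  have hle : ∀ i, |v i| ≤ ‖v‖ := fun i => norm_le_pi_norm v i
  refine ⟨‖v‖, norm_nonneg _, ?_, ?_, ?_⟩
  · rw [← hqv]
    simp only [hφ]
    have h1 := hGm v
    have h2 : 0 ≤ G v := integral_nonneg fun u => sq_nonneg _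
    change ‖v‖ ^ 2 ≤ (m⁻¹ + ∑ i, L i) * G v
    have h3 : ‖v‖ ^ 2 ≤ m⁻¹ * G v := by
      rw [inv_mul_eq_div, le_div_iff₀ hm]; linarith
    nlinarith [mul_nonneg hS h2]
  · intro u hu
    rw [← hqv, hφ]
    calc |F v u| ≤ ∑ i, |v i * MvPolynomial.eval u (b i : MvPolynomial (Fin d) ℝ)| :=
          Finset.abs_sum_le_sum_abs _ _
      _ ≤ ∑ i, ‖v‖ * L i := by
          refine Finset.sum_le_sum fun i _ => ?_
          rw [abs_mul]
          exact mul_le_mul (hle i) (hL1 i u hu) (abs_nonneg _) (norm_nonneg _)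
      _ = (∑ i, L i) * ‖v‖ := by rw [← Finset.mul_sum, mul_comm]
      _ ≤ _ := by gcongr; have := inv_pos.2 hm; linarith
  · intro u hu w hw
    rw [← hqv, hφ, hφ]
    calc |F v u - F v w| = |∑ i, v i * (MvPolynomial.eval u (b i : MvPolynomial (Fin d) ℝ) - MvPolynomial.eval w (b i : MvPolynomial (Fin d) ℝ))| := by
          simp only [F, mul_sub, Finset.sum_sub_distrib]
      _ ≤ ∑ i, |v i * (MvPolynomial.eval u (b i : MvPolynomial (Fin d) ℝ) - MvPolynomial.eval w (b i : MvPolynomial (Fin d) ℝ))| :=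
          Finset.abs_sum_le_sum_abs _ _
      _ ≤ ∑ i, ‖v‖ * (L i * ‖u - w‖) := by
          refine Finset.sum_le_sum fun i _ => ?_
          rw [abs_mul]
          exact mul_le_mul (hle i) (hL2 i u hu w hw) (abs_nonneg _) (norm_nonneg _)
      _ = (∑ i, L i) * ‖v‖ * ‖u - w‖ := by
          rw [← Finset.mul_sum, ← Finset.sum_mul]; ring
      _ ≤ _ := by gcongr; have := inv_pos.2 hm; linarith

lemma aux_scaled (d p : ℕ) : ∃ A : ℝ, 0 < A ∧ ∀ q : MvPolynomial (Fin d) ℝ, q.totalDegree ≤ p →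
    ∀ (a : Fin d → ℝ) (h : ℝ), 0 < h →
    ∃ N : ℝ, 0 ≤ N ∧ h ^ d * N ^ 2 ≤ A * ∫ u in Set.Icc a (fun i => a i + h), (MvPolynomial.eval u q) ^ 2 ∧
     (∀ u ∈ Metric.closedBall a (3 * h), |MvPolynomial.eval u q| ≤ A * N) ∧
      ∀ u ∈ Metric.closedBall a (3 * h), ∀ v ∈ Metric.closedBall a (3 * h),
        |MvPolynomial.eval u q - MvPolynomial.eval v q| ≤ A * N * (h⁻¹ * ‖u - v‖) := by
  obtain ⟨A, hA, H⟩ := aux_unit d p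
  refine ⟨A, hA, fun q hq a h hh => ?_⟩
  let T : Fin d → MvPolynomial (Fin d) ℝ := fun i => MvPolynomial.C (a i) + MvPolynomial.C h * MvPolynomial.X i
  have hT : ∀ i, (T i).totalDegree ≤ 1 := by
    intro i
    refine (MvPolynomial.totalDegree_add _ _).trans (max_le (by simp) ?_)
    refine (MvPolynomial.totalDegree_mul _ _).trans ?_
    simp
  have hev : ∀ y, MvPolynomial.eval y (MvPolynomial.bind₁ T q) = MvPolynomial.eval (a + h • y) q := by
    intro y
    rw [MvPolynomial.eval, MvPolynomial.eval₂Hom_bind₁]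
    congr 2
    ext i
    simp [T]
  obtain ⟨N, hN, h1, h2, h3⟩ := H _ ((aux_deg d q T hT).trans hq)
  simp only [hev] at h1 h2 h3
  have hmem : ∀ u ∈ Metric.closedBall a (3 * h), h⁻¹ • (u - a) ∈ Metric.closedBall (0 : Fin d → ℝ) 3 := by
    intro u hu
    rw [mem_closedBall_iff_norm] at hu
    rw [mem_closedBall_zero_iff, norm_smul, norm_inv, Real.norm_of_nonneg hh.le, inv_mul_le_iff₀ hh]
    linarith
  have hback : ∀ u : Fin d → ℝ, a + h • (h⁻¹ • (u - a)) = u := by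
    intro u
    rw [smul_inv_smul₀ hh.ne']; abel
  refine ⟨N, hN, ?_, ?_, ?_⟩
  · have e : ∫ u in Set.Icc (0 : Fin d → ℝ) 1, (MvPolynomial.eval (a + h • u) q) ^ 2 =
        (h ^ d)⁻¹ * ∫ u in Set.Icc a (fun i => a i + h), (MvPolynomial.eval u q) ^ 2 := by
      rw [Measure.setIntegral_comp_smul_of_pos volume (fun u => (MvPolynomial.eval (a + u) q) ^ 2) _ hh]
      simp only [Module.finrank_fin_fun, smul_eq_mul]
      congr 1
      have hmp := (measurePreserving_add_left (volume : Measure (Fin d → ℝ)) a)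
      rw [← hmp.setIntegral_preimage_emb (measurableEmbedding_addLeft a)
        (fun u => (MvPolynomial.eval u q) ^ 2) (Set.Icc a (fun i => a i + h))]
      congr 2
      ext u
      simp only [Set.mem_smul_set_iff_inv_smul_mem₀ hh.ne', Set.mem_preimage, Set.mem_Icc, Pi.le_def]
      refine and_congr (forall_congr' fun i => ?_) (forall_congr' fun i => ?_)
      · simp [hh]
      · simp [inv_mul_le_iff₀ hh]
    rw [e] at h1
    have : 0 < h ^ d := by positivity
    calc _ ≤ h ^ d * (A * ((h ^ d)⁻¹ * ∫ u in Set.Icc a (fun i => a i + h), (MvPolynomial.eval u q) ^ 2)) := by gcongr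
      _ = _ := by field_simp
  · intro u hu
    have := h2 _ (hmem u hu)
    rwa [hback] at this
  · intro u hu v hv
    have := h3 _ (hmem u hu) _ (hmem v hv)
    rwa [hback, hback, ← smul_sub, sub_sub_sub_cancel_right, norm_smul, norm_inv, Real.norm_of_nonneg hh.le] at this

/-- measurable and bounded on `U` -/
def AuxBM {d : ℕ} (U : Set (Fin d → ℝ)) (F : (Fin d → ℝ) → ℝ) : Prop :=
  Measurable F ∧ ∃ C : ℝ, ∀ u ∈ U, |F u| ≤ C

lemma AuxBM.mul {d : ℕ} {U : Set (Fin d → ℝ)} {F G : (Fin d → ℝ) → ℝ} (hF : AuxBM U F)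
    (hG : AuxBM U G) : AuxBM U (fun u => F u * G u) := by
  obtain ⟨m, C, hC⟩ := hF
  obtain ⟨m', C', hC'⟩ := hG
  refine ⟨m.mul m', C * C', fun u hu => ?_⟩
  rw [abs_mul]
  exact mul_le_mul (hC u hu) (hC' u hu) (abs_nonneg _) ((abs_nonneg _).trans (hC u hu))

lemma AuxBM.sub {d : ℕ} {U : Set (Fin d → ℝ)} {F G : (Fin d → ℝ) → ℝ} (hF : AuxBM U F)
    (hG : AuxBM U G) : AuxBM U (fun u => F u - G u) := by
  obtain ⟨m, C, hC⟩ := hF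
  obtain ⟨m', C', hC'⟩ := hG
  exact ⟨m.sub m', C + C', fun u hu => (abs_sub _ _).trans (add_le_add (hC u hu) (hC' u hu))⟩

lemma AuxBM.sq {d : ℕ} {U : Set (Fin d → ℝ)} {F : (Fin d → ℝ) → ℝ} (hF : AuxBM U F) :
    AuxBM U (fun u => F u ^ 2) := by
  simpa only [pow_two] using hF.mul hF

lemma AuxBM.poly {d : ℕ} {U : Set (Fin d → ℝ)} (hU : IsCompact U) (q : MvPolynomial (Fin d) ℝ) :
    AuxBM U (fun u => MvPolynomial.eval u q) := by
  obtain ⟨C, hC⟩ := hU.exists_bound_of_continuousOn (MvPolynomial.continuous_eval q).continuousOn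
  exact ⟨(MvPolynomial.continuous_eval q).measurable, C, hC⟩

lemma AuxBM.int {d : ℕ} {U : Set (Fin d → ℝ)} (hU : IsCompact U) {F : (Fin d → ℝ) → ℝ}
    (hF : AuxBM U F) : IntegrableOn F U := by
  obtain ⟨m, C, hC⟩ := hF
  refine Measure.integrableOn_of_bounded (M := C) hU.measure_lt_top.ne m.aestronglyMeasurable ?_
  exact (ae_restrict_iff' hU.measurableSet).2 (Filter.Eventually.of_forall hC)

lemma aux_normal {d p : ℕ} {U : Set (Fin d → ℝ)} (hU : IsCompact U) {f w : (Fin d → ℝ) → ℝ}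
    (hf : AuxBM U f) (hw : AuxBM U w) (g : MvPolynomial (Fin d) ℝ) (hg : g.totalDegree ≤ p)
    (hmin : ∀ q : MvPolynomial (Fin d) ℝ, q.totalDegree ≤ p →
      ∫ u in U, (f u - MvPolynomial.eval u g) ^ 2 * w u
        ≤ ∫ u in U, (f u - MvPolynomial.eval u q) ^ 2 * w u)
    (r : MvPolynomial (Fin d) ℝ) (hr : r.totalDegree ≤ p) :
    ∫ u in U, (f u - MvPolynomial.eval u g) * MvPolynomial.eval u r * w u = 0 := by
  have Bg := AuxBM.poly hU g
  have Br := AuxBM.poly hU r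
  have I1 := (((hf.sub Bg).sq).mul hw).int hU
  have I2 := (((hf.sub Bg).mul Br).mul hw).int hU
  have I3 := ((Br.sq).mul hw).int hU
  set b := ∫ u in U, (f u - MvPolynomial.eval u g) * MvPolynomial.eval u r * w u with hb
  set a := ∫ u in U, MvPolynomial.eval u r ^ 2 * w u with ha
  have key : ∀ t : ℝ, 0 ≤ t ^ 2 * a - 2 * t * b := by
    intro t
    have h1 := hmin (g + MvPolynomial.C t * r) (by
      refine (MvPolynomial.totalDegree_add _ _).trans (max_le hg ?_)
      refine (MvPolynomial.totalDegree_mul _ _).trans ?_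
      simpa using hr)
    have e : (fun u => (f u - MvPolynomial.eval u (g + MvPolynomial.C t * r)) ^ 2 * w u) =
        fun u => ((f u - MvPolynomial.eval u g) ^ 2 * w u -
          (2 * t) * ((f u - MvPolynomial.eval u g) * MvPolynomial.eval u r * w u)) +
          t ^ 2 * (MvPolynomial.eval u r ^ 2 * w u) := by
      ext u
      simp only [map_add, map_mul, MvPolynomial.eval_C]
      ring
    have I12 : IntegrableOn (fun u => (f u - MvPolynomial.eval u g) ^ 2 * w u -
        (2 * t) * ((f u - MvPolynomial.eval u g) * MvPolynomial.eval u r * w u)) U :=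
      I1.sub (I2.const_mul _)
    rw [e, integral_add I12 (I3.const_mul _),
      integral_sub I1 (I2.const_mul _), integral_const_mul, integral_const_mul] at h1
    linarith
  by_contra hb0
  by_cases ha0 : a = 0
  · have := key b
    have : 0 < b ^ 2 := by positivity
    nlinarith
  · have h2 := key (b / a)
    have h3 : (b / a) ^ 2 * a - 2 * (b / a) * b = - (b ^ 2 / a) := by field_simp; ring
    have h4 := key 1
    have h5 := key (-1)
    have h6 : 0 < a := lt_of_le_of_ne (by linarith) (Ne.symm ha0)
    have : 0 < b ^ 2 / a := by positivity
    linarith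

/-- lower bound of weighted integral -/
lemma aux_lower {d : ℕ} {U C : Set (Fin d → ℝ)} (hU : IsCompact U) (hC : MeasurableSet C)
    (hCU : C ⊆ U) {w : (Fin d → ℝ) → ℝ}
    (hw : AuxBM U w) (hw0 : ∀ u ∈ U, 0 ≤ w u) (ρlo : ℝ) (hlo : ∀ u ∈ C, ρlo ≤ w u)
    (q : MvPolynomial (Fin d) ℝ) :
    ρlo * ∫ u in C, MvPolynomial.eval u q ^ 2 ≤ ∫ u in U, MvPolynomial.eval u q ^ 2 * w u := by
  have Bq := AuxBM.poly hU q
  have I1 := (Bq.sq.mul hw).int hU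
  have I2 := Bq.sq.int hU
  rw [← integral_const_mul]
  calc _ ≤ ∫ u in C, MvPolynomial.eval u q ^ 2 * w u := by
        refine setIntegral_mono_on ((I2.mono_set hCU).const_mul _) (I1.mono_set hCU) hC ?_
        intro u hu
        nlinarith [hlo u hu, sq_nonneg (MvPolynomial.eval u q)]
    _ ≤ _ := by
        refine setIntegral_mono_set I1 ?_ (Filter.Eventually.of_forall hCU)
        refine (ae_restrict_iff' hU.measurableSet).2 (Filter.Eventually.of_forall fun u hu => ?_)
        exact mul_nonneg (sq_nonneg _) (hw0 u hu)

lemma aux_vol {d : ℕ} (x : Fin d → ℝ) {r : ℝ} (hr : 0 ≤ r) :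
    ∫ u, (Metric.closedBall x r).indicator (fun _ => (1:ℝ)) u = (2 * r) ^ d := by
  rw [integral_indicator_const _ Metric.isClosed_closedBall.measurableSet, Measure.real,
    Real.volume_pi_closedBall x hr, ENNReal.toReal_ofReal (by positivity)]
  simp

lemma aux_ind_int {d : ℕ} (x : Fin d → ℝ) (r : ℝ) :
    Integrable ((Metric.closedBall x r).indicator (fun _ => (1:ℝ))) := by
  rw [integrable_indicator_iff Metric.isClosed_closedBall.measurableSet]
  exact integrableOn_const (isCompact_closedBall x r).measure_lt_top.ne

lemma aux_symm {d : ℕ} (x x' : Fin d → ℝ) {h : ℝ} (hh : 0 < h) (hδ : ‖x - x'‖ ≤ h) :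
    ∃ D : (Fin d → ℝ) → ℝ, Integrable D ∧ (∀ u, 0 ≤ D u) ∧
      (∀ u, |(Metric.closedBall x h).indicator (fun _ => (1:ℝ)) u -
        (Metric.closedBall x' h).indicator (fun _ => (1:ℝ)) u| ≤ D u) ∧
      (∀ u, u ∉ Metric.closedBall x h → u ∉ Metric.closedBall x' h → D u = 0) ∧
      ∫ u, D u ≤ 2 * (2 ^ d * d) * h ^ d * (h⁻¹ * ‖x - x'‖) := by
  set δ := ‖x - x'‖ with hδd
  have hδ0 : 0 ≤ δ := norm_nonneg _
  have hs1 : Metric.closedBall x (h - δ) ⊆ Metric.closedBall x h ∩ Metric.closedBall x' h := by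
    refine Set.subset_inter (Metric.closedBall_subset_closedBall (by linarith)) ?_
    refine Metric.closedBall_subset_closedBall' ?_
    rw [dist_eq_norm]; linarith
  have hs2 : Metric.closedBall x' (h - δ) ⊆ Metric.closedBall x h ∩ Metric.closedBall x' h := by
    refine Set.subset_inter ?_ (Metric.closedBall_subset_closedBall (by linarith))
    refine Metric.closedBall_subset_closedBall' ?_
    rw [dist_comm, dist_eq_norm]; linarith
  classical
  have J1 : Integrable (fun u => (Metric.closedBall x h).indicator (fun _ => (1:ℝ)) u -
      (Metric.closedBall x (h - δ)).indicator (fun _ => (1:ℝ)) u) :=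
    (aux_ind_int x h).sub (aux_ind_int x (h - δ))
  have J2 : Integrable (fun u => (Metric.closedBall x' h).indicator (fun _ => (1:ℝ)) u -
      (Metric.closedBall x' (h - δ)).indicator (fun _ => (1:ℝ)) u) :=
    (aux_ind_int x' h).sub (aux_ind_int x' (h - δ))
  refine ⟨fun u => ((Metric.closedBall x h).indicator (fun _ => (1:ℝ)) u -
      (Metric.closedBall x (h - δ)).indicator (fun _ => (1:ℝ)) u) +
      ((Metric.closedBall x' h).indicator (fun _ => (1:ℝ)) u -
      (Metric.closedBall x' (h - δ)).indicator (fun _ => (1:ℝ)) u), J1.add J2, ?_, ?_, ?_, ?_⟩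
  · intro u
    have a1 := @hs1 u
    have a2 := @hs2 u
    simp only [Set.mem_inter_iff] at a1 a2
    simp only [Set.indicator_apply]
    split_ifs <;> first | (exfalso; tauto) | norm_num
  · intro u
    have a1 := @hs1 u
    have a2 := @hs2 u
    simp only [Set.mem_inter_iff] at a1 a2
    simp only [Set.indicator_apply]
    split_ifs <;> first | (exfalso; tauto) | norm_num
  · intro u h1 h2
    have a1 := @hs1 u
    have a2 := @hs2 u
    simp only [Set.mem_inter_iff] at a1 a2
    simp only [Set.indicator_apply]
    split_ifs <;> first | (exfalso; tauto) | norm_num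
  · beta_reduce
    rw [integral_add J1 J2, integral_sub (aux_ind_int _ _) (aux_ind_int _ _),
      integral_sub (aux_ind_int _ _) (aux_ind_int _ _), aux_vol _ hh.le, aux_vol _ hh.le,
      aux_vol _ (by linarith), aux_vol _ (by linarith)]
    set t := h⁻¹ * δ with ht
    have ht1 : t ≤ 1 := by rw [ht, inv_mul_le_iff₀ hh]; linarith
    have e : h - δ = h * (1 + -t) := by rw [ht]; field_simp; ring
    have hB := one_add_mul_le_pow (a := -t) (by linarith) d
    rw [e, mul_pow, mul_pow, mul_pow]
    have h2 : 0 ≤ (2:ℝ) ^ d * h ^ d := by positivity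
    nlinarith [mul_le_mul_of_nonneg_left hB h2]

lemma aux_cube {d : ℕ} (c : Fin d → ℝ) {s h : ℝ} (hh : 0 < h) (hhs : h ≤ s) (x : Fin d → ℝ)
    (hx : x ∈ Set.Icc c (fun i => c i + s)) :
    ∃ a : Fin d → ℝ, Set.Icc a (fun i => a i + h) ⊆ Set.Icc c (fun i => c i + s) ∧
      Set.Icc a (fun i => a i + h) ⊆ Metric.closedBall x h ∧ dist x a ≤ h := by
  refine ⟨fun i => max (c i) (x i - h), ?_, ?_, ?_⟩
  · intro u hu
    refine ⟨fun i => (le_max_left _ _).trans (hu.1 i), fun i => ?_⟩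
    have h1 := hu.2 i
    have h2 := hx.2 i
    dsimp only at h1 h2 ⊢
    have : max (c i) (x i - h) + h ≤ c i + s := by
      rcases max_cases (c i) (x i - h) with h | h <;> linarith
    linarith
  · intro u hu
    rw [Metric.mem_closedBall, dist_pi_le_iff hh.le]
    intro i
    have h1 := hu.1 i
    have h2 := hu.2 i
    have h3 := hx.1 i
    dsimp only at h1 h2
    rw [Real.dist_eq, abs_le]
    rcases max_cases (c i) (x i - h) with h | h <;> constructor <;> linarith
  · rw [dist_pi_le_iff hh.le]
    intro i
    have h3 := hx.1 i
    rw [Real.dist_eq, abs_le]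
    rcases max_cases (c i) (x i - h) with h | h <;> constructor <;> linarith

/-- crude bound on the norm of the minimizer -/
lemma aux_crude {d p : ℕ} {U C : Set (Fin d → ℝ)} (hU : IsCompact U) (hC : MeasurableSet C)
    (hCU : C ⊆ U) {f w : (Fin d → ℝ) → ℝ} (hf : AuxBM U f) (hf1 : ∀ u ∈ U, f u ∈ Set.Icc (0:ℝ) 1)
    (hw : AuxBM U w) (hw0 : ∀ u ∈ U, 0 ≤ w u) (ρlo ρhi : ℝ) (hlo : ∀ u ∈ C, ρlo ≤ w u)
    (hhi0 : 0 ≤ ρhi) (x : Fin d → ℝ) (h : ℝ) (hh : 0 < h)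
    (hhi : ∀ u ∈ U, w u ≤ ρhi * (Metric.closedBall x h).indicator (fun _ => (1:ℝ)) u)
    (g : MvPolynomial (Fin d) ℝ)
    (hmin : ∀ q : MvPolynomial (Fin d) ℝ, q.totalDegree ≤ p →
      ∫ u in U, (f u - MvPolynomial.eval u g) ^ 2 * w u
        ≤ ∫ u in U, (f u - MvPolynomial.eval u q) ^ 2 * w u) :
    ρlo * ∫ u in C, MvPolynomial.eval u g ^ 2 ≤ 4 * (ρhi * (2 * h) ^ d) := by
  have h0 := hmin 0 (by simp)
  simp only [map_zero, sub_zero] at h0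
  have Bg := AuxBM.poly hU g
  have I1 := ((hf.sub Bg).sq.mul hw).int hU
  have I2 := (hf.sq.mul hw).int hU
  have I3 := (Bg.sq.mul hw).int hU
  have J := ((aux_ind_int x h).const_mul ρhi)
  have hfw : ∫ u in U, f u ^ 2 * w u ≤ ρhi * (2 * h) ^ d := by
    calc _ ≤ ∫ u in U, ρhi * (Metric.closedBall x h).indicator (fun _ => (1:ℝ)) u := by
          refine setIntegral_mono_on I2 J.integrableOn hU.measurableSet fun u hu => ?_
          have := hf1 u hu
          have h2 : f u ^ 2 ≤ 1 := by nlinarith [this.1, this.2]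
          have := hw0 u hu
          have := hhi u hu
          nlinarith
      _ ≤ ∫ u, ρhi * (Metric.closedBall x h).indicator (fun _ => (1:ℝ)) u := by
          refine setIntegral_le_integral J (Filter.Eventually.of_forall fun u => ?_)
          exact mul_nonneg hhi0 (Set.indicator_nonneg (fun _ _ => zero_le_one) _)
      _ = _ := by rw [integral_const_mul, aux_vol x hh.le]
  refine (aux_lower hU hC hCU hw hw0 ρlo hlo g).trans ?_
  calc _ ≤ ∫ u in U, (2 * ((f u - MvPolynomial.eval u g) ^ 2 * w u) + 2 * (f u ^ 2 * w u)) := by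
        refine setIntegral_mono_on I3 ((I1.const_mul 2).add (I2.const_mul 2)) hU.measurableSet
          fun u hu => ?_
        have h1 : MvPolynomial.eval u g ^ 2 ≤ 2 * (f u - MvPolynomial.eval u g) ^ 2 + 2 * f u ^ 2 := by
          nlinarith [sq_nonneg (2 * f u - MvPolynomial.eval u g)]
        have := mul_le_mul_of_nonneg_right h1 (hw0 u hu)
        linarith
    _ = 2 * (∫ u in U, (f u - MvPolynomial.eval u g) ^ 2 * w u) + 2 * ∫ u in U, f u ^ 2 * w u := by
        rw [integral_add (I1.const_mul 2) (I2.const_mul 2), integral_const_mul, integral_const_mul]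
    _ ≤ _ := by linarith


/-- **Lipschitz continuity of the local `L²`-projection in the evaluation point**
(Part 3 of the paper's Lemma on the `L²(P_X)`-projection). There is `κ₀ > 0`, depending
only on `p`, `d`, `ρ̲` and `ρ̄`, such that for every axis-parallel cube `U` of side `s`,
weight `ρ` with `ρ̲ ≤ ρ ≤ ρ̄` on `U`, bandwidth `0 < h ≤ s`, measurable
`f : U → [0,1]`, points `x, x̂ ∈ U`, and minimizing polynomials `g_x` (at `x`) and
`g_x̂` (at `x̂`) of total degree at most `p` of the kernel-weighted least-squares
criterion, one has `|g_x(x) − g_x̂(x̂)| ≤ κ₀ h⁻¹ ‖x − x̂‖_∞`. -/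
theorem projection_lipschitz_in_point (d p : ℕ) (hd : 1 ≤ d) (ρlo ρhi : ℝ)
    (hρlo : 0 < ρlo) (hρ : ρlo ≤ ρhi) :
    ∃ κ₀ : ℝ, 0 < κ₀ ∧
      ∀ (c : Fin d → ℝ) (s : ℝ), 0 < s →
      ∀ ρ : (Fin d → ℝ) → ℝ, Measurable ρ →
        (∀ u ∈ Set.Icc c (fun i => c i + s), ρlo ≤ ρ u ∧ ρ u ≤ ρhi) →
      ∀ h : ℝ, 0 < h → h ≤ s →
      ∀ f : (Fin d → ℝ) → ℝ, Measurable f →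
        (∀ u ∈ Set.Icc c (fun i => c i + s), f u ∈ Set.Icc (0 : ℝ) 1) →
      ∀ x ∈ Set.Icc c (fun i => c i + s), ∀ x' ∈ Set.Icc c (fun i => c i + s),
      ∀ gx : MvPolynomial (Fin d) ℝ, gx.totalDegree ≤ p →
        (∀ q : MvPolynomial (Fin d) ℝ, q.totalDegree ≤ p →
          ∫ u in Set.Icc c (fun i => c i + s),
              (f u - MvPolynomial.eval u gx) ^ 2 * (if ‖x - u‖ ≤ h then ρ u else 0)
            ≤ ∫ u in Set.Icc c (fun i => c i + s),
              (f u - MvPolynomial.eval u q) ^ 2 * (if ‖x - u‖ ≤ h then ρ u else 0)) →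
      ∀ gx' : MvPolynomial (Fin d) ℝ, gx'.totalDegree ≤ p →
        (∀ q : MvPolynomial (Fin d) ℝ, q.totalDegree ≤ p →
          ∫ u in Set.Icc c (fun i => c i + s),
              (f u - MvPolynomial.eval u gx') ^ 2 * (if ‖x' - u‖ ≤ h then ρ u else 0)
            ≤ ∫ u in Set.Icc c (fun i => c i + s),
              (f u - MvPolynomial.eval u q) ^ 2 * (if ‖x' - u‖ ≤ h then ρ u else 0)) →
        |MvPolynomial.eval x gx - MvPolynomial.eval x' gx'| ≤ κ₀ * h⁻¹ * ‖x - x'‖ := by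
  obtain ⟨A, hA, HA⟩ := aux_scaled d p
  have hρhi : 0 < ρhi := hρlo.trans_le hρ
  set M := Real.sqrt (A * (4 * ρhi * 2 ^ d) / ρlo) with hM
  have hM0 : 0 ≤ M := Real.sqrt_nonneg _
  set K := A * (ρhi * ((1 + A * M) * A) * (2 * (2 ^ d * d))) / ρlo with hK
  have hK0 : 0 ≤ K := by positivity
  refine ⟨A * K + 2 * (A * M) + 1, by positivity, ?_⟩
  intro c s hs ρ hρm hρb h hh hhs f hfm hf1 x hx x' hx' gx hgx hmin gx' hgx' hmin'
  set U := Set.Icc c (fun i => c i + s) with hUdef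
  have hU : IsCompact U := isCompact_Icc
  let w : (Fin d → ℝ) → (Fin d → ℝ) → ℝ := fun z u => if ‖z - u‖ ≤ h then ρ u else 0
  have hball : ∀ z u : Fin d → ℝ, u ∈ Metric.closedBall z h ↔ ‖z - u‖ ≤ h := by
    intro z u
    rw [Metric.mem_closedBall, dist_comm, dist_eq_norm]
  have hwind : ∀ z u, w z u = ρ u * (Metric.closedBall z h).indicator (fun _ => (1:ℝ)) u := by
    classical
    intro z u
    simp only [w, Set.indicator_apply, hball]
    split_ifs <;> simp
  have hw0 : ∀ z, ∀ u ∈ U, 0 ≤ w z u := by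
    intro z u hu
    simp only [w]
    split_ifs
    · exact hρlo.le.trans (hρb u hu).1
    · exact le_rfl
  have hwhi : ∀ z, ∀ u ∈ U, w z u ≤ ρhi * (Metric.closedBall z h).indicator (fun _ => (1:ℝ)) u := by
    intro z u hu
    rw [hwind]
    exact mul_le_mul_of_nonneg_right (hρb u hu).2 (Set.indicator_nonneg (fun _ _ => zero_le_one) _)
  have hwBM : ∀ z, AuxBM U (w z) := by
    intro z
    refine ⟨Measurable.ite ?_ hρm measurable_const, ρhi, fun u hu => ?_⟩
    · exact (isClosed_le (by fun_prop) continuous_const).measurableSet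
    · rw [abs_of_nonneg (hw0 z u hu)]
      simp only [w]
      split_ifs
      · exact (hρb u hu).2
      · exact hρhi.le
  have hfBM : AuxBM U f :=
    ⟨hfm, 1, fun u hu => abs_le.2 ⟨by linarith [(hf1 u hu).1], (hf1 u hu).2⟩⟩
  -- crude bounds
  have crude : ∀ z ∈ U, ∀ g : MvPolynomial (Fin d) ℝ, g.totalDegree ≤ p →
      (∀ q : MvPolynomial (Fin d) ℝ, q.totalDegree ≤ p →
        ∫ u in U, (f u - MvPolynomial.eval u g) ^ 2 * w z u
          ≤ ∫ u in U, (f u - MvPolynomial.eval u q) ^ 2 * w z u) →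
      (∀ u, dist u z ≤ 2 * h → |MvPolynomial.eval u g| ≤ A * M) ∧
      (∀ u v, dist u z ≤ 2 * h → dist v z ≤ 2 * h →
        |MvPolynomial.eval u g - MvPolynomial.eval v g| ≤ A * M * (h⁻¹ * ‖u - v‖)) := by
    intro z hz g hg hm
    obtain ⟨a, ha1, ha2, ha3⟩ := aux_cube c hh hhs z hz
    obtain ⟨N, hN0, hN1, hN2, hN3⟩ := HA g hg a h hh
    have hlo : ∀ u ∈ Set.Icc a (fun i => a i + h), ρlo ≤ w z u := by
      intro u hu
      have : ‖z - u‖ ≤ h := (hball z u).1 (ha2 hu)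
      simp only [w, if_pos this]
      exact (hρb u (ha1 hu)).1
    have h1 := aux_crude hU measurableSet_Icc ha1 hfBM hf1 (hwBM z) (hw0 z) ρlo ρhi hlo hρhi.le z h hh
      (hwhi z) g hm
    have hNM : N ≤ M := by
      rw [hM]
      refine Real.le_sqrt_of_sq_le ?_
      rw [le_div_iff₀ hρlo]
      have hhd : 0 < h ^ d := by positivity
      refine le_of_mul_le_mul_left ?_ hhd
      rw [mul_pow] at h1
      have h2 := mul_le_mul_of_nonneg_left h1 hA.le
      have h3 := mul_le_mul_of_nonneg_right hN1 hρlo.le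
      linarith
    have hmem : ∀ u, dist u z ≤ 2 * h → u ∈ Metric.closedBall a (3 * h) := by
      intro u hu
      rw [Metric.mem_closedBall]
      linarith [dist_triangle u z a]
    refine ⟨fun u hu => (hN2 u (hmem u hu)).trans (by gcongr),
      fun u v hu hv => (hN3 u (hmem u hu) v (hmem v hv)).trans (by gcongr)⟩
  obtain ⟨c1, -⟩ := crude x hx gx hgx hmin
  obtain ⟨c1', c2'⟩ := crude x' hx' gx' hgx' hmin'
  set t := h⁻¹ * ‖x - x'‖ with ht
  have ht0 : 0 ≤ t := by positivity
  rw [mul_assoc]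
  rcases lt_or_ge h ‖x - x'‖ with hbig | hsmall
  · have ht1 : 1 ≤ t := by
      rw [ht, inv_mul_eq_div, one_le_div hh]; exact hbig.le
    have b1 := c1 x (by simp; positivity)
    have b2 := c1' x' (by simp; positivity)
    have b3 := abs_sub (MvPolynomial.eval x gx) (MvPolynomial.eval x' gx')
    have hAM : 0 ≤ A * M := by positivity
    have hAK : 0 ≤ A * K := by positivity
    nlinarith [mul_nonneg hAM (sub_nonneg.2 ht1), mul_nonneg hAK ht0]
  · have hdxx : dist x x' ≤ h := by rw [dist_eq_norm]; exact hsmall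
    have hdxx' : dist x' x ≤ h := by rw [dist_comm]; exact hdxx
    obtain ⟨a, ha1, ha2, ha3⟩ := aux_cube c hh hhs x hx
    have hr : (gx - gx').totalDegree ≤ p :=
      (MvPolynomial.totalDegree_sub _ _).trans (max_le hgx hgx')
    obtain ⟨N, hN0, hN1, hN2, -⟩ := HA (gx - gx') hr a h hh
    have hmem : ∀ u, dist u x ≤ 2 * h → u ∈ Metric.closedBall a (3 * h) := by
      intro u hu
      rw [Metric.mem_closedBall]
      linarith [dist_triangle u x a]
    have hlo : ∀ u ∈ Set.Icc a (fun i => a i + h), ρlo ≤ w x u := by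
      intro u hu
      have : ‖x - u‖ ≤ h := (hball x u).1 (ha2 hu)
      simp only [w, if_pos this]
      exact (hρb u (ha1 hu)).1
    have hlow := aux_lower hU measurableSet_Icc ha1 (hwBM x) (hw0 x) ρlo hlo (gx - gx')
    have n1 := aux_normal hU hfBM (hwBM x) gx hgx hmin _ hr
    have n2 := aux_normal hU hfBM (hwBM x') gx' hgx' hmin' _ hr
    have Br := AuxBM.poly hU (gx - gx')
    have Bg := AuxBM.poly hU gx
    have Bg' := AuxBM.poly hU gx'
    have I1 := (((hfBM.sub Bg).mul Br).mul (hwBM x)).int hU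
    have I2 := (((hfBM.sub Bg').mul Br).mul (hwBM x')).int hU
    have I3 := ((Br.sq).mul (hwBM x)).int hU
    obtain ⟨D, hDi, hD0, hD1, hD2, hD3⟩ := aux_symm x x' hh hsmall
    have hmain : ∫ u in U, MvPolynomial.eval u (gx - gx') ^ 2 * w x u ≤
        ρhi * ((1 + A * M) * (A * N)) * (2 * (2 ^ d * d) * h ^ d * t) := by
      have e1 : ∫ u in U, MvPolynomial.eval u (gx - gx') ^ 2 * w x u =
          ∫ u in U, ((MvPolynomial.eval u (gx - gx') ^ 2 * w x u +
            (f u - MvPolynomial.eval u gx) * MvPolynomial.eval u (gx - gx') * w x u) -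
            (f u - MvPolynomial.eval u gx') * MvPolynomial.eval u (gx - gx') * w x' u) := by
        have I13 : IntegrableOn (fun u => MvPolynomial.eval u (gx - gx') ^ 2 * w x u +
            (f u - MvPolynomial.eval u gx) * MvPolynomial.eval u (gx - gx') * w x u) U := I3.add I1
        rw [integral_sub I13 I2, integral_add I3 I1, n1, n2]
        ring
      rw [e1]
      have hKD := hDi.const_mul (ρhi * ((1 + A * M) * (A * N)))
      calc _ ≤ ∫ u in U, ρhi * ((1 + A * M) * (A * N)) * D u := by
            refine setIntegral_mono_on ((I3.add I1).sub I2) hKD.integrableOn hU.measurableSet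
              fun u hu => ?_
            have e2 : (MvPolynomial.eval u (gx - gx') ^ 2 * w x u +
              (f u - MvPolynomial.eval u gx) * MvPolynomial.eval u (gx - gx') * w x u) -
              (f u - MvPolynomial.eval u gx') * MvPolynomial.eval u (gx - gx') * w x' u =
              ρ u * ((f u - MvPolynomial.eval u gx') * MvPolynomial.eval u (gx - gx')) *
                ((Metric.closedBall x h).indicator (fun _ => (1:ℝ)) u -
                (Metric.closedBall x' h).indicator (fun _ => (1:ℝ)) u) := by
              rw [hwind, hwind, map_sub]; ring
            rw [e2]
            by_cases hin : u ∈ Metric.closedBall x h ∨ u ∈ Metric.closedBall x' h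
            · have d1 : dist u x ≤ 2 * h ∧ dist u x' ≤ 2 * h := by
                rcases hin with hin | hin <;> rw [Metric.mem_closedBall] at hin
                · exact ⟨by linarith, by linarith [dist_triangle u x x']⟩
                · exact ⟨by linarith [dist_triangle u x' x], by linarith⟩
              refine (le_abs_self _).trans ?_
              rw [abs_mul, abs_mul, abs_mul]
              have f1 : |ρ u| ≤ ρhi := by
                rw [abs_of_nonneg (hρlo.le.trans (hρb u hu).1)]
                exact (hρb u hu).2
              have f2 : |f u - MvPolynomial.eval u gx'| ≤ 1 + A * M := by
                refine (abs_sub _ _).trans (add_le_add ?_ (c1' u d1.2))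
                rw [abs_of_nonneg (hf1 u hu).1]
                exact (hf1 u hu).2
              have f3 := hN2 u (hmem u d1.1)
              have f4 := hD1 u
              gcongr
            · push Not at hin
              rw [Set.indicator_of_notMem hin.1, Set.indicator_of_notMem hin.2,
                hD2 u hin.1 hin.2]
              simp
        _ ≤ ∫ u, ρhi * ((1 + A * M) * (A * N)) * D u := by
            refine setIntegral_le_integral hKD (Filter.Eventually.of_forall fun u => ?_)
            have := hD0 u
            show 0 ≤ ρhi * ((1 + A * M) * (A * N)) * D u
            positivity
        _ ≤ _ := by
            rw [integral_const_mul]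
            gcongr
    have hNK : N ≤ K * t := by
      rcases hN0.eq_or_lt with h0 | hpos
      · rw [← h0]; positivity
      · have hhd : 0 < h ^ d := by positivity
        rw [hK, div_mul_eq_mul_div, le_div_iff₀ hρlo]
        refine le_of_mul_le_mul_left ?_ (mul_pos hhd hpos)
        have h2 := mul_le_mul_of_nonneg_left (hlow.trans hmain) hA.le
        have h3 := mul_le_mul_of_nonneg_right hN1 hρlo.le
        linarith
    have b1 := hN2 x (hmem x (by simp; positivity))
    have b2 := c2' x x' (by linarith) (by simp; positivity)
    rw [map_sub] at b1
    have b3 := abs_sub_le (MvPolynomial.eval x gx) (MvPolynomial.eval x gx') (MvPolynomial.eval x' gx')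
    have b4 : A * N ≤ A * (K * t) := by gcongr
    have b5 : 0 ≤ A * M * t := by positivity
    rw [← ht] at b2
    linarith
end
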